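/- Suppose Assumptions A1(m), A2 and A3 hold with m≥2, that condition (S′) holds (Λ₁=−Λ₁ and Dq_λ=Dq_{−λ} for all λ∈Λ₁), that τ_λ>0 for every λ∈Λ₁, and that q_λ≥κ on H_T for a constant κ>0. Then for any δ∈(0,1) there exist τ₀>0, h₀′∈(0,h₀] and a constant K₁ such that for all h∈(0,h₀′], all n=1,…,m and all smooth φ there exists an operator 𝒦∈𝔎 for which inequality (3.24.01) holds on H_T: n·Σ_{ν∈Λ}A₁(δ̄_{h,ν}φ) + n(n−1)Σ_{λ∈Λ²}(δ̄_{h,λ}φ)Q_λT_{h,λ}φ ≤ (1−δ)Σ_{λ∈Λ²}𝒬(δ̄_{h,λ}φ) + K₁Σ_{λ∈Λ}𝒬(δ̄_{h,λ}φ) + 2(1−δ)c·𝒦(Σ_{λ∈Λ²}|δ̄_{h,λ}φ|²) + K₁𝒦(Σ_{λ∈Λ}|δ̄_{h,λ}φ|²). In particular Assumption A5 is satisfied. -/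

import Mathlib

open scoped BigOperators
open MeasureTheory

noncomputable section

/-- `ℝ^d` with Euclidean norm. -/
abbrev Vec (d : ℕ) := EuclideanSpace ℝ (Fin d)

namespace GK

variable {d : ℕ}

/-- forward difference `δ_{h,λ}φ`. -/
def del (h : ℝ) (l : Vec d) (φ : Vec d → ℝ) (x : Vec d) : ℝ :=
  (φ (x + h • l) - φ x) / h

/-- symmetric second difference `Δ_{h,λ}φ`. -/
def del2 (h : ℝ) (l : Vec d) (φ : Vec d → ℝ) (x : Vec d) : ℝ :=
  (φ (x + h • l) - 2 * φ x + φ (x - h • l)) / h ^ 2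

/-- `i`-th partial derivative `D_iφ`. -/
def pd (i : Fin d) (φ : Vec d → ℝ) (x : Vec d) : ℝ :=
  fderiv ℝ φ x (EuclideanSpace.single i 1)

/-- second partial derivatives `D_{ij}φ`. -/
def pd2 (i j : Fin d) (φ : Vec d → ℝ) (x : Vec d) : ℝ :=
  iteratedFDeriv ℝ 2 φ x ![EuclideanSpace.single i 1, EuclideanSpace.single j 1]

/-- The index type for `Λ = Λ₁ ∪ Λ₂`: `Sum.inl` is an element of `Λ₁`,
`Sum.inr i` stands for the vector `ℓⁱ ∈ Λ₂`. -/
abbrev Dir (L1 : Finset (Vec d)) : Type _ := {l : Vec d // l ∈ L1} ⊕ Fin d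

/-- the subtype of elements of `Λ₁`. -/
abbrev L1t (L1 : Finset (Vec d)) := {l : Vec d // l ∈ L1}

/-- the weighted difference operator `δ̄_{h,λ}`, `λ ∈ Λ`:
`τ_λ δ_{h,λ}` on `Λ₁` and `τ₀ D_i` on `Λ₂`. -/
def dbar (h τ₀ : ℝ) (τ : Vec d → ℝ) {L1 : Finset (Vec d)} :
    Dir L1 → (Vec d → ℝ) → Vec d → ℝ
  | Sum.inl l => fun φ x => τ l.1 * del h l.1 φ x
  | Sum.inr i => fun φ x => τ₀ * pd i φ x

/-- the shift operator `T_{h,λ}`, `λ ∈ Λ`: a genuine shift on `Λ₁`, the identity on `Λ₂`. -/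
def shiftD (h : ℝ) {L1 : Finset (Vec d)} : Dir L1 → (Vec d → ℝ) → Vec d → ℝ
  | Sum.inl l => fun φ x => φ (x + h • l.1)
  | Sum.inr _ => fun φ x => φ x

/-- `δ̄_{h,λ}` for a multivector `λ ∈ Λᵏ`. -/
def dbarT (h τ₀ : ℝ) (τ : Vec d → ℝ) {L1 : Finset (Vec d)} {k : ℕ}
    (lam : Fin k → Dir L1) (φ : Vec d → ℝ) : Vec d → ℝ :=
  (List.ofFn lam).foldr (fun a ψ => dbar h τ₀ τ a ψ) φ

/-- `T_{h,λ}` for a multivector `λ ∈ Λᵏ`. -/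
def shiftT (h : ℝ) {L1 : Finset (Vec d)} {k : ℕ}
    (lam : Fin k → Dir L1) (φ : Vec d → ℝ) : Vec d → ℝ :=
  (List.ofFn lam).foldr (fun a ψ => shiftD h a ψ) φ

/-- `|Λ₁|² = Σ_{λ∈Λ₁} |λ|²`. -/
def normL1sq (L1 : Finset (Vec d)) : ℝ := ∑ l ∈ L1, ‖l‖ ^ 2

/-- `‖Λ₁‖² = Σ_{λ∈Λ₁} |τ_λ λ|²`. -/
def wnormL1sq (L1 : Finset (Vec d)) (τ : Vec d → ℝ) : ℝ := ∑ l ∈ L1, ‖τ l • l‖ ^ 2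

/-- the operator `L⁰_h` (at a fixed time, `qt μ`, `pt μ` being the coefficients
as functions of `x`). -/
def L0 (h : ℝ) (L1 : Finset (Vec d)) (qt pt : Vec d → Vec d → ℝ)
    (φ : Vec d → ℝ) (x : Vec d) : ℝ :=
  h⁻¹ * ∑ l ∈ L1, qt l x * del h l φ x + ∑ l ∈ L1, pt l x * del h l φ x

/-- the quadratic form `𝒬(φ) = Σ_{μ∈Λ₁} χ_μ (δ_{h,μ}φ)²`, `χ_μ = q_μ + h p_μ`. -/
def Qform (h : ℝ) (L1 : Finset (Vec d)) (qt pt : Vec d → Vec d → ℝ)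
    (φ : Vec d → ℝ) (x : Vec d) : ℝ :=
  ∑ l ∈ L1, (qt l x + h * pt l x) * (del h l φ x) ^ 2

/-- `Q_μ φ = h⁻¹ Σ_{λ∈Λ₁} (δ̄_{h,μ} q_λ) δ_{h,λ}φ` for a multivector `μ`. -/
def Qmu (h τ₀ : ℝ) (τ : Vec d → ℝ) (L1 : Finset (Vec d)) {k : ℕ}
    (qt : Vec d → Vec d → ℝ) (lam : Fin k → Dir L1) (φ : Vec d → ℝ) (x : Vec d) : ℝ :=
  h⁻¹ * ∑ l ∈ L1, dbarT h τ₀ τ lam (qt l) x * del h l φ x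

/-- `P_μ φ = Σ_{λ∈Λ₁} (δ̄_{h,μ} p_λ) δ_{h,λ}φ` for a multivector `μ`. -/
def Pmu (h τ₀ : ℝ) (τ : Vec d → ℝ) (L1 : Finset (Vec d)) {k : ℕ}
    (pt : Vec d → Vec d → ℝ) (lam : Fin k → Dir L1) (φ : Vec d → ℝ) (x : Vec d) : ℝ :=
  ∑ l ∈ L1, dbarT h τ₀ τ lam (pt l) x * del h l φ x

/-- `L⁰_μ = Q_μ + P_μ`. -/
def L0mu (h τ₀ : ℝ) (τ : Vec d → ℝ) (L1 : Finset (Vec d)) {k : ℕ}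
    (qt pt : Vec d → Vec d → ℝ) (lam : Fin k → Dir L1) (φ : Vec d → ℝ) (x : Vec d) : ℝ :=
  Qmu h τ₀ τ L1 qt lam φ x + Pmu h τ₀ τ L1 pt lam φ x

/-- `A₁(φ) = 2 Σ_{λ∈Λ} (δ̄_{h,λ}φ) L⁰_λ T_{h,λ}φ`. -/
def A1form (h τ₀ : ℝ) (τ : Vec d → ℝ) (L1 : Finset (Vec d))
    (qt pt : Vec d → Vec d → ℝ) (φ : Vec d → ℝ) (x : Vec d) : ℝ :=
  2 * ∑ a : Dir L1, dbar h τ₀ τ a φ x * L0mu h τ₀ τ L1 qt pt ![a] (shiftD h a φ) x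

/-- membership in the class `𝔎` of bounded operators on bounded Borel functions
preserving the cone of nonnegative functions and with `𝒦1 ≤ 1`. -/
def MemFrakK (K : (Vec d → ℝ) → Vec d → ℝ) : Prop :=
  (∀ φ : Vec d → ℝ, Measurable φ → Bornology.IsBounded (Set.range φ) →
      Measurable (K φ) ∧ Bornology.IsBounded (Set.range (K φ))) ∧
  (∀ φ : Vec d → ℝ, (∀ x, 0 ≤ φ x) → ∀ x, 0 ≤ K φ x) ∧
  ∀ x, K (fun _ => (1 : ℝ)) x ≤ 1

/-- inequality (3.24.1) of Assumption 2.4 (A4), at a fixed time. -/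
def IneqA4 (h τ₀ : ℝ) (τ : Vec d → ℝ) (L1 : Finset (Vec d))
    (qt pt : Vec d → Vec d → ℝ) (ct : Vec d → ℝ) (δ K₁ : ℝ) (m : ℕ)
    (K : (Vec d → ℝ) → Vec d → ℝ) (φ : Vec d → ℝ) (x : Vec d) : Prop :=
  (m : ℝ) * A1form h τ₀ τ L1 qt pt φ x ≤
    (1 - δ) * (∑ a : Dir L1, Qform h L1 qt pt (dbar h τ₀ τ a φ) x)
    + K₁ * Qform h L1 qt pt φ x
    + 2 * (1 - δ) * ct x * K (fun y => ∑ a : Dir L1, (dbar h τ₀ τ a φ y) ^ 2) x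

/-- inequality (3.24.01) of Assumption 2.5 (A5), at a fixed time. -/
def IneqA5 (h τ₀ : ℝ) (τ : Vec d → ℝ) (L1 : Finset (Vec d))
    (qt pt : Vec d → Vec d → ℝ) (ct : Vec d → ℝ) (δ K₁ : ℝ) (n : ℕ)
    (K : (Vec d → ℝ) → Vec d → ℝ) (φ : Vec d → ℝ) (x : Vec d) : Prop :=
  (n : ℝ) * (∑ a : Dir L1, A1form h τ₀ τ L1 qt pt (dbar h τ₀ τ a φ) x)
  + (n : ℝ) * ((n : ℝ) - 1) *
      (∑ lam : Fin 2 → Dir L1,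
        dbarT h τ₀ τ lam φ x * Qmu h τ₀ τ L1 qt lam (shiftT h lam φ) x)
  ≤ (1 - δ) * (∑ lam : Fin 2 → Dir L1, Qform h L1 qt pt (dbarT h τ₀ τ lam φ) x)
    + K₁ * (∑ a : Dir L1, Qform h L1 qt pt (dbar h τ₀ τ a φ) x)
    + 2 * (1 - δ) * ct x *
        K (fun y => ∑ lam : Fin 2 → Dir L1, (dbarT h τ₀ τ lam φ y) ^ 2) x
    + K₁ * K (fun y => ∑ a : Dir L1, (dbar h τ₀ τ a φ y) ^ 2) x

/-- regularity and boundedness of the coefficients `q, p, c` (the `q,p,c` part of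
Assumption 2.1 (A1(m))). -/
def CoefReg (T : ℝ) (L1 : Finset (Vec d)) (m : ℕ)
    (q p : Vec d → ℝ → Vec d → ℝ) (c : ℝ → Vec d → ℝ) (M : ℕ → ℝ) : Prop :=
  (∀ l ∈ L1, ∀ t ∈ Set.Icc (0 : ℝ) T, ContDiff ℝ (m : ℕ∞) (q l t) ∧ ContDiff ℝ (m : ℕ∞) (p l t)) ∧
  (∀ t ∈ Set.Icc (0 : ℝ) T, ContDiff ℝ (m : ℕ∞) (c t)) ∧
  (∀ k ≤ m, ∀ l ∈ L1,
    ContinuousOn (fun tx : ℝ × Vec d => iteratedFDeriv ℝ k (q l tx.1) tx.2)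
      (Set.Icc (0 : ℝ) T ×ˢ Set.univ) ∧
    ContinuousOn (fun tx : ℝ × Vec d => iteratedFDeriv ℝ k (p l tx.1) tx.2)
      (Set.Icc (0 : ℝ) T ×ˢ Set.univ)) ∧
  (∀ k ≤ m,
    ContinuousOn (fun tx : ℝ × Vec d => iteratedFDeriv ℝ k (c tx.1) tx.2)
      (Set.Icc (0 : ℝ) T ×ˢ Set.univ)) ∧
  (∀ k ≤ m, ∀ t ∈ Set.Icc (0 : ℝ) T, ∀ x,
    (∑ l ∈ L1, (‖iteratedFDeriv ℝ k (q l t) x‖ ^ 2 + ‖iteratedFDeriv ℝ k (p l t) x‖ ^ 2))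
      + ‖iteratedFDeriv ℝ k (c t) x‖ ^ 2 ≤ (M k) ^ 2)

/-- regularity of the free terms `f, g` (the `f,g` part of Assumption 2.1 (A1(m))). -/
def FreeReg (T : ℝ) (m : ℕ) (f : ℝ → Vec d → ℝ) (g : Vec d → ℝ) : Prop :=
  (∀ t ∈ Set.Icc (0 : ℝ) T, ContDiff ℝ (m : ℕ∞) (f t)) ∧
  (∀ k ≤ m,
    ContinuousOn (fun tx : ℝ × Vec d => iteratedFDeriv ℝ k (f tx.1) tx.2)
      (Set.Icc (0 : ℝ) T ×ˢ Set.univ)) ∧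
  ContDiff ℝ (m : ℕ∞) g

/-- `u` is a bounded continuous solution of the integral equation (2.1). -/
def IsSol (h T : ℝ) (L1 : Finset (Vec d)) (q p : Vec d → ℝ → Vec d → ℝ)
    (c : ℝ → Vec d → ℝ) (f : ℝ → Vec d → ℝ) (g : Vec d → ℝ)
    (u : ℝ → Vec d → ℝ) : Prop :=
  (∃ B, ∀ t ∈ Set.Icc (0 : ℝ) T, ∀ x, |u t x| ≤ B) ∧
  ContinuousOn (fun tx : ℝ × Vec d => u tx.1 tx.2) (Set.Icc (0 : ℝ) T ×ˢ Set.univ) ∧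
  ∀ t ∈ Set.Icc (0 : ℝ) T, ∀ x,
    u t x = g x + ∫ s in (0 : ℝ)..t,
      (L0 h L1 (fun l => q l s) (fun l => p l s) (u s) x - c s x * u s x + f s x)

/-- `sup_{H_T} ψ`. -/
def supHT (T : ℝ) (ψ : ℝ → Vec d → ℝ) : ℝ :=
  sSup {r : ℝ | ∃ t ∈ Set.Icc (0 : ℝ) T, ∃ x, r = ψ t x}

/-- `F_m = Σ_{k ≤ m} sup_{H_T} |Dᵏf|`. -/
def Fnorm (T : ℝ) (m : ℕ) (f : ℝ → Vec d → ℝ) : ℝ :=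
  ∑ k ∈ Finset.range (m + 1), supHT T fun t x => ‖iteratedFDeriv ℝ k (f t) x‖

/-- `G_m = Σ_{k ≤ m} sup_{ℝ^d} |Dᵏg|`. -/
def Gnorm (m : ℕ) (g : Vec d → ℝ) : ℝ :=
  ∑ k ∈ Finset.range (m + 1), sSup (Set.range fun x => ‖iteratedFDeriv ℝ k g x‖)

end GK

namespace GK

variable {d : ℕ}

/-- size of the direction `a` as measured by `dbar`. -/
def wt (τ₀ : ℝ) (τ : Vec d → ℝ) {L1 : Finset (Vec d)} : Dir L1 → ℝ
  | Sum.inl l => τ l.1 * ‖l.1‖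
  | Sum.inr _ => τ₀

lemma del_bound {h : ℝ} (hh : 0 < h) (l : Vec d) {F : Type*} [NormedAddCommGroup F]
    [NormedSpace ℝ F] {f : Vec d → F} (hf : Differentiable ℝ f) {B : ℝ}
    (hB : ∀ x, ‖fderiv ℝ f x‖ ≤ B) (x : Vec d) :
    ‖f (x + h • l) - f x‖ ≤ h * (‖l‖ * B) := by
  have := Convex.norm_image_sub_le_of_norm_fderiv_le (𝕜 := ℝ) (f := f) (C := B)
    (s := Set.univ) (x := x) (y := x + h • l) (fun y _ => hf y) (fun y _ => hB y)
    convex_univ (Set.mem_univ _) (Set.mem_univ _)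
  rw [add_sub_cancel_left, norm_smul, Real.norm_of_nonneg hh.le] at this
  linarith

lemma dbar_bound {h τ₀ : ℝ} (hh : 0 < h) (hτ₀ : 0 < τ₀) {τ : Vec d → ℝ} {L1 : Finset (Vec d)}
    (hτ : ∀ l ∈ L1, 0 < τ l) {f : Vec d → ℝ} (hf : Differentiable ℝ f) {B : ℝ}
    (hB : ∀ x, ‖fderiv ℝ f x‖ ≤ B) (a : Dir L1) (x : Vec d) :
    |dbar h τ₀ τ a f x| ≤ wt τ₀ τ a * B := by
  rcases a with l | i
  · have h1 := del_bound hh l.1 hf hB x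
    have h2 := hτ l.1 l.2
    simp only [dbar, wt, del]
    rw [abs_mul, abs_div, abs_of_pos h2, abs_of_pos hh, mul_assoc]
    gcongr
    rw [div_le_iff₀ hh]
    rw [Real.norm_eq_abs] at h1
    linarith
  · simp only [dbar, wt, pd]
    rw [abs_mul, abs_of_pos hτ₀]
    gcongr
    have h1 := (fderiv ℝ f x).le_opNorm (EuclideanSpace.single i (1 : ℝ))
    rw [PiLp.norm_single, norm_one, mul_one, Real.norm_eq_abs] at h1
    exact h1.trans (hB x)

lemma dbar_deriv {h τ₀ : ℝ} (hh : 0 < h) (hτ₀ : 0 < τ₀) {τ : Vec d → ℝ} {L1 : Finset (Vec d)}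
    (hτ : ∀ l ∈ L1, 0 < τ l) {f : Vec d → ℝ} (hf : Differentiable ℝ f)
    (hf2 : Differentiable ℝ (fderiv ℝ f)) {B : ℝ}
    (hB : ∀ x, ‖fderiv ℝ (fderiv ℝ f) x‖ ≤ B) (a : Dir L1) :
    Differentiable ℝ (dbar h τ₀ τ a f) ∧
      ∀ x, ‖fderiv ℝ (dbar h τ₀ τ a f) x‖ ≤ wt τ₀ τ a * B := by
  rcases a with l | i
  · have key : ∀ x, HasFDerivAt (dbar h τ₀ τ (Sum.inl l : Dir L1) f)
        ((τ l.1 * h⁻¹) • (fderiv ℝ f (x + h • l.1) - fderiv ℝ f x)) x := by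
      intro x
      have h1 : HasFDerivAt (fun y => f (y + h • l.1)) (fderiv ℝ f (x + h • l.1)) x :=
        (hasFDerivAt_comp_add_right (h • l.1)).2 (hf _).hasFDerivAt
      have h2 := (h1.sub (hf x).hasFDerivAt).const_smul (τ l.1 * h⁻¹)
      refine h2.congr_of_eventuallyEq (Filter.Eventually.of_forall fun y => ?_)
      simp [dbar, del]
      ring
    refine ⟨fun x => (key x).differentiableAt, fun x => ?_⟩
    rw [(key x).fderiv, norm_smul]
    have h1 := del_bound hh l.1 hf2 hB x
    have h2 := hτ l.1 l.2
    rw [Real.norm_of_nonneg (by positivity)]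
    simp only [wt]
    calc τ l.1 * h⁻¹ * ‖fderiv ℝ f (x + h • l.1) - fderiv ℝ f x‖
        ≤ τ l.1 * h⁻¹ * (h * (‖l.1‖ * B)) := by gcongr
      _ = _ := by field_simp
  · have key : ∀ x, HasFDerivAt (dbar h τ₀ τ (Sum.inr i : Dir L1) f)
        (τ₀ • ((fderiv ℝ (fderiv ℝ f) x).flip (EuclideanSpace.single i 1))) x := by
      intro x
      have h1 := ((hf2 x).hasFDerivAt.clm_apply
        (hasFDerivAt_const (EuclideanSpace.single i (1 : ℝ)) x)).const_smul τ₀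
      rw [ContinuousLinearMap.comp_zero, zero_add] at h1
      exact h1
    refine ⟨fun x => (key x).differentiableAt, fun x => ?_⟩
    rw [(key x).fderiv, norm_smul, Real.norm_of_nonneg hτ₀.le]
    simp only [wt]
    gcongr
    have h1 := ((fderiv ℝ (fderiv ℝ f) x).flip).le_opNorm (EuclideanSpace.single i (1 : ℝ))
    rw [PiLp.norm_single, norm_one, mul_one, ContinuousLinearMap.opNorm_flip] at h1
    exact h1.trans (hB x)

lemma dbarT_one (h τ₀ : ℝ) (τ : Vec d → ℝ) {L1 : Finset (Vec d)} (a : Dir L1)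
    (f : Vec d → ℝ) : dbarT h τ₀ τ ![a] f = dbar h τ₀ τ a f := by
  simp [dbarT]

lemma dbarT_two (h τ₀ : ℝ) (τ : Vec d → ℝ) {L1 : Finset (Vec d)} (lam : Fin 2 → Dir L1)
    (f : Vec d → ℝ) :
    dbarT h τ₀ τ lam f = dbar h τ₀ τ (lam 0) (dbar h τ₀ τ (lam 1) f) := by
  simp [dbarT, List.ofFn_succ]

lemma shiftT_two (h : ℝ) {L1 : Finset (Vec d)} (lam : Fin 2 → Dir L1)
    (f : Vec d → ℝ) :
    shiftT h lam f = shiftD h (lam 0) (shiftD h (lam 1) f) := by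
  simp [shiftT, List.ofFn_succ]

lemma pd_del (h : ℝ) (l : Vec d) (i : Fin d) {f : Vec d → ℝ} (hf : Differentiable ℝ f)
    (x : Vec d) : pd i (del h l f) x = del h l (pd i f) x := by
  have h1 : HasFDerivAt (fun y => f (y + h • l)) (fderiv ℝ f (x + h • l)) x :=
    (hasFDerivAt_comp_add_right (h • l)).2 (hf _).hasFDerivAt
  have h2 := (h1.sub (hf x).hasFDerivAt).const_smul h⁻¹
  have h3 : HasFDerivAt (del h l f) (h⁻¹ • (fderiv ℝ f (x + h • l) - fderiv ℝ f x)) x := by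
    refine h2.congr_of_eventuallyEq (Filter.Eventually.of_forall fun y => ?_)
    simp [del]
    ring
  simp only [pd, h3.fderiv, del]
  simp
  ring

/-- symmetrized difference `h⁻¹ (δ_l ψ + δ_{-l} ψ)`. -/
def sd (h : ℝ) (l : Vec d) (ψ : Vec d → ℝ) (x : Vec d) : ℝ :=
  h⁻¹ * (del h l ψ x + del h (-l) ψ x)

lemma sym_sum (h : ℝ) (L1 : Finset (Vec d)) (hs : ∀ l ∈ L1, -l ∈ L1) (g : Vec d → ℝ)
    (hg : ∀ l ∈ L1, g l = g (-l)) (ψ : Vec d → ℝ) (x : Vec d) :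
    h⁻¹ * ∑ l ∈ L1, g l * del h l ψ x = (1 / 2) * ∑ l ∈ L1, g l * sd h l ψ x := by
  have h1 : ∑ l ∈ L1, g l * del h l ψ x = ∑ l ∈ L1, g l * del h (-l) ψ x := by
    refine Finset.sum_bij' (fun l _ => -l) (fun l _ => -l) hs hs (by simp) (by simp) ?_
    intro l hl
    rw [neg_neg, hg l hl]
  have h2 : ∑ l ∈ L1, g l * sd h l ψ x
      = h⁻¹ * (∑ l ∈ L1, g l * del h l ψ x + ∑ l ∈ L1, g l * del h (-l) ψ x) := by
    rw [← Finset.sum_add_distrib, Finset.mul_sum]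
    refine Finset.sum_congr rfl fun l _ => ?_
    simp only [sd]; ring
  rw [h2, ← h1]; ring

lemma sd_zero {h : ℝ} (hh : 0 < h) (l : Vec d) (v : Vec d → ℝ) (x : Vec d) :
    sd h l v x = - del h l (del h (-l) v) x := by
  simp only [sd, del]
  have e1 : x + h • l + h • -l = x := by simp
  rw [e1]
  field_simp
  ring

lemma sd_shift {h : ℝ} (hh : 0 < h) (l a : Vec d) (v : Vec d → ℝ) (x : Vec d) :
    sd h l (fun y => v (y + h • a)) x
      = - del h l (del h (-l) v) x + del h a (del h l v) x + del h a (del h (-l) v) x := by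
  simp only [sd, del]
  have e1 : x + h • l + h • -l = x := by simp
  have e2 : x + h • l + h • a = x + h • a + h • l := by abel
  have e3 : x + h • -l + h • a = x + h • a + h • -l := by abel
  rw [e1, e2, e3]
  field_simp
  ring

lemma sd_shift2 {h : ℝ} (hh : 0 < h) (l a b : Vec d) (v : Vec d → ℝ) (x : Vec d) :
    sd h l (fun y => v (y + h • a + h • b)) x
      = - del h l (del h (-l) v) x + del h a (del h l v) x + del h a (del h (-l) v) x
        + del h b (del h l v) x + del h b (del h (-l) v) x
        + h * del h b (del h a (del h l v)) x + h * del h b (del h a (del h (-l) v)) x := by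
  simp only [sd, del]
  have e1 : x + h • l + h • -l = x := by simp
  have e2 : x + h • l + h • a + h • b = x + h • b + h • a + h • l := by abel
  have e3 : x + h • -l + h • a + h • b = x + h • b + h • a + h • -l := by abel
  have e4 : x + h • a + h • b = x + h • b + h • a := by abel
  rw [e1, e2, e3, e4]
  field_simp
  ring

lemma sd_shiftD_bound {h : ℝ} (hh : 0 < h) {L1 : Finset (Vec d)} (hs : ∀ l ∈ L1, -l ∈ L1)
    (v : Vec d → ℝ) (x : Vec d) {R : ℝ}
    (hR : ∀ u ∈ L1, ∀ w ∈ L1, |del h u (del h w v) x| ≤ R) (a : Dir L1) (l : Vec d)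
    (hl : l ∈ L1) : |sd h l (shiftD h a v) x| ≤ 3 * R := by
  have h1 := abs_le.1 (hR l hl (-l) (hs l hl))
  rcases a with a | i
  · have h2 := abs_le.1 (hR a.1 a.2 (-l) (hs l hl))
    have h3 := abs_le.1 (hR a.1 a.2 l hl)
    simp only [shiftD]
    rw [sd_shift hh, abs_le]
    constructor <;> linarith
  · simp only [shiftD]
    rw [sd_zero hh, abs_le]
    constructor <;> linarith

lemma sd_shiftT_bound {h : ℝ} (hh : 0 < h) (hh1 : h ≤ 1) {L1 : Finset (Vec d)}
    (hs : ∀ l ∈ L1, -l ∈ L1)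
    (v : Vec d → ℝ) (x : Vec d) {R R' : ℝ}
    (hR : ∀ u ∈ L1, ∀ w ∈ L1, |del h u (del h w v) x| ≤ R)
    (hR' : ∀ u ∈ L1, ∀ w ∈ L1, ∀ z ∈ L1, |del h u (del h w (del h z v)) x| ≤ R')
    (lam : Fin 2 → Dir L1) (l : Vec d)
    (hl : l ∈ L1) : |sd h l (shiftT h lam v) x| ≤ 5 * R + 2 * R' := by
  have h1 := abs_le.1 (hR l hl (-l) (hs l hl))
  have hR'0 : 0 ≤ R' := (abs_nonneg _).trans (hR' l hl l hl l hl)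
  have H3 : ∀ u ∈ L1, ∀ w ∈ L1, ∀ z ∈ L1, |h * del h u (del h w (del h z v)) x| ≤ R' := by
    intro u hu w hw z hz
    rw [abs_mul, abs_of_pos hh]
    have := hR' u hu w hw z hz
    nlinarith [abs_nonneg (del h u (del h w (del h z v)) x)]
  rw [shiftT_two]
  generalize lam 0 = a
  generalize lam 1 = b
  rcases a with a | i <;> rcases b with b | j
  · have h2 := abs_le.1 (hR a.1 a.2 (-l) (hs l hl))
    have h3 := abs_le.1 (hR a.1 a.2 l hl)
    have h4 := abs_le.1 (hR b.1 b.2 (-l) (hs l hl))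
    have h5 := abs_le.1 (hR b.1 b.2 l hl)
    have h6 := abs_le.1 (H3 b.1 b.2 a.1 a.2 (-l) (hs l hl))
    have h7 := abs_le.1 (H3 b.1 b.2 a.1 a.2 l hl)
    simp only [shiftD]
    rw [sd_shift2 hh, abs_le]
    constructor <;> linarith
  · have := sd_shiftD_bound hh hs v x hR (Sum.inl a) l hl
    simp only [shiftD] at this ⊢
    linarith
  · have := sd_shiftD_bound hh hs v x hR (Sum.inl b) l hl
    simp only [shiftD] at this ⊢
    linarith
  · have := sd_shiftD_bound hh hs v x hR (Sum.inr i) l hl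
    simp only [shiftD] at this ⊢
    linarith

lemma del_smul (h s : ℝ) (u : Vec d) (f : Vec d → ℝ) (x : Vec d) :
    del h u (fun y => s * f y) x = s * del h u f x := by
  simp only [del]; ring

lemma del_shift {h : ℝ} (hh : 0 < h) (l a : Vec d) (v : Vec d → ℝ) (x : Vec d) :
    del h l (fun y => v (y + h • a)) x = del h l v x + h * del h a (del h l v) x := by
  simp only [del]
  have e2 : x + h • l + h • a = x + h • a + h • l := by abel
  rw [e2]
  field_simp
  ring

lemma del_shiftD_bound {h : ℝ} (hh : 0 < h) (hh1 : h ≤ 1) {L1 : Finset (Vec d)}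
    (v : Vec d → ℝ) (x : Vec d) {R R' : ℝ}
    (hR' : ∀ u ∈ L1, |del h u v x| ≤ R')
    (hR : ∀ u ∈ L1, ∀ w ∈ L1, |del h u (del h w v) x| ≤ R) (a : Dir L1) (l : Vec d)
    (hl : l ∈ L1) : |del h l (shiftD h a v) x| ≤ R' + R := by
  have h1 := hR' l hl
  have hR0 : 0 ≤ R := (abs_nonneg _).trans (hR l hl l hl)
  rcases a with a | i
  · simp only [shiftD]
    rw [del_shift hh]
    refine (abs_add_le _ _).trans (add_le_add h1 ?_)
    rw [abs_mul, abs_of_pos hh]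
    have := hR a.1 a.2 l hl
    nlinarith [abs_nonneg (del h a.1 (del h l v) x)]
  · simp only [shiftD]
    linarith


lemma wt_nonneg {τ₀ : ℝ} (hτ₀ : 0 < τ₀) {τ : Vec d → ℝ} {L1 : Finset (Vec d)}
    (hτ : ∀ l ∈ L1, 0 < τ l) (a : Dir L1) : 0 ≤ wt τ₀ τ a := by
  rcases a with l | i
  · exact mul_nonneg (hτ _ l.2).le (norm_nonneg _)
  · exact hτ₀.le

lemma abs_sum_mul_le (L1 : Finset (Vec d)) (g f : Vec d → ℝ) {G R : ℝ}
    (hg : ∀ l ∈ L1, |g l| ≤ G) (hf : ∀ l ∈ L1, |f l| ≤ R) :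
    |∑ l ∈ L1, g l * f l| ≤ (L1.card : ℝ) * (G * R) := by
  refine (Finset.abs_sum_le_sum_abs _ _).trans ?_
  have := Finset.sum_le_card_nsmul L1 (fun l => |g l * f l|) (G * R) ?_
  · rwa [nsmul_eq_mul] at this
  · intro l hl
    show |g l * f l| ≤ G * R
    rw [abs_mul]
    exact mul_le_mul (hg l hl) (hf l hl) (abs_nonneg _) ((abs_nonneg _).trans (hg l hl))

set_option maxHeartbeats 1600000 in
lemma core {h τ₀ A B r k : ℝ} (hh : 0 < h) (hh1 : h ≤ 1) (hτ₀ : 0 < τ₀) (hτ₀1 : τ₀ ≤ 1)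
    {τ : Vec d → ℝ} {L1 : Finset (Vec d)} (hτ : ∀ l ∈ L1, 0 < τ l)
    (hs : ∀ l ∈ L1, -l ∈ L1) (hA1 : 1 ≤ A) (hA : ∀ l ∈ L1, τ l ≤ A)
    (hA' : ∀ l ∈ L1, (τ l)⁻¹ ≤ A) (hA'' : ∀ l ∈ L1, τ l * ‖l‖ ≤ A) (hB : 0 ≤ B) (hr1 : 1 ≤ r)
    (hr : ∀ z S : ℝ, k * z ^ 2 ≤ S → |z| ≤ r * √S) (hk : 0 < k)
    (qt pt : Vec d → Vec d → ℝ) (x : Vec d)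
    (hq1 : ∀ a : Dir L1, ∀ l ∈ L1, |dbar h τ₀ τ a (qt l) x| ≤ wt τ₀ τ a * B)
    (hp1 : ∀ a : Dir L1, ∀ l ∈ L1, |dbar h τ₀ τ a (pt l) x| ≤ wt τ₀ τ a * B)
    (hq2 : ∀ lam : Fin 2 → Dir L1, ∀ l ∈ L1,
      |dbarT h τ₀ τ lam (qt l) x| ≤ wt τ₀ τ (lam 0) * wt τ₀ τ (lam 1) * B)
    (hsym1 : ∀ a : Dir L1, ∀ l ∈ L1, dbar h τ₀ τ a (qt l) x = dbar h τ₀ τ a (qt (-l)) x)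
    (hsym2 : ∀ lam : Fin 2 → Dir L1, ∀ l ∈ L1,
      dbarT h τ₀ τ lam (qt l) x = dbarT h τ₀ τ lam (qt (-l)) x)
    (hchi : ∀ l ∈ L1, k ≤ qt l x + h * pt l x)
    (φ : Vec d → ℝ) (hφ : Differentiable ℝ φ) (n m : ℕ) (hn : 1 ≤ n) (hnm : n ≤ m) :
    (n : ℝ) * (∑ a : Dir L1, A1form h τ₀ τ L1 qt pt (dbar h τ₀ τ a φ) x)
      + (n : ℝ) * ((n : ℝ) - 1) * (∑ lam : Fin 2 → Dir L1,
        dbarT h τ₀ τ lam φ x * Qmu h τ₀ τ L1 qt lam (shiftT h lam φ) x)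
    ≤ ((m * (Fintype.card (Dir L1) * (2 * (Fintype.card (Dir L1))))
        + m * m * (Fintype.card (Fin 2 → Dir L1))) * (3 * (L1.card : ℝ) * B * A ^ 5 * r ^ 2)) *
      ((√(∑ a : Dir L1, Qform h L1 qt pt (dbar h τ₀ τ a φ) x)
        + τ₀ * √(∑ lam : Fin 2 → Dir L1, (dbarT h τ₀ τ lam φ x) ^ 2)) *
       (√(∑ lam : Fin 2 → Dir L1, Qform h L1 qt pt (dbarT h τ₀ τ lam φ) x)
        + √(∑ a : Dir L1, Qform h L1 qt pt (dbar h τ₀ τ a φ) x))) := by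
  have hA0 : 0 < A := by linarith
  have hr0 : 0 < r := by linarith
  have hQ : ∀ ψ : Vec d → ℝ, 0 ≤ Qform h L1 qt pt ψ x := fun ψ =>
    Finset.sum_nonneg fun l hl => mul_nonneg (hk.le.trans (hchi l hl)) (sq_nonneg _)
  have hQk : ∀ ψ : Vec d → ℝ, ∀ u ∈ L1, k * (del h u ψ x) ^ 2 ≤ Qform h L1 qt pt ψ x := by
    intro ψ u hu
    refine (mul_le_mul_of_nonneg_right (hchi u hu) (sq_nonneg _)).trans ?_
    exact Finset.single_le_sum (f := fun l => (qt l x + h * pt l x) * (del h l ψ x) ^ 2)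
      (fun l hl => mul_nonneg (hk.le.trans (hchi l hl)) (sq_nonneg _)) hu
  set s2 := √(∑ a : Dir L1, Qform h L1 qt pt (dbar h τ₀ τ a φ) x) with hs2
  set s3 := √(∑ lam : Fin 2 → Dir L1, Qform h L1 qt pt (dbarT h τ₀ τ lam φ) x) with hs3
  set e := √(∑ lam : Fin 2 → Dir L1, (dbarT h τ₀ τ lam φ x) ^ 2) with he
  have s20 : 0 ≤ s2 := Real.sqrt_nonneg _
  have s30 : 0 ≤ s3 := Real.sqrt_nonneg _
  have e0 : 0 ≤ e := Real.sqrt_nonneg _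
  have b2 : ∀ u ∈ L1, ∀ a : Dir L1, |del h u (dbar h τ₀ τ a φ) x| ≤ r * s2 := by
    intro u hu a
    refine hr _ _ ((hQk _ u hu).trans ?_)
    exact Finset.single_le_sum (f := fun a : Dir L1 => Qform h L1 qt pt (dbar h τ₀ τ a φ) x)
      (fun a _ => hQ _) (Finset.mem_univ a)
  have b3 : ∀ u ∈ L1, ∀ a b : Dir L1,
      |del h u (dbar h τ₀ τ a (dbar h τ₀ τ b φ)) x| ≤ r * s3 := by
    intro u hu a b
    refine hr _ _ ((hQk _ u hu).trans ?_)
    have := Finset.single_le_sum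
      (f := fun lam : Fin 2 → Dir L1 => Qform h L1 qt pt (dbarT h τ₀ τ lam φ) x)
      (fun a _ => hQ _) (Finset.mem_univ ![a, b])
    simpa [dbarT_two] using this
  have be : ∀ a b : Dir L1, |dbar h τ₀ τ a (dbar h τ₀ τ b φ) x| ≤ e := by
    intro a b
    refine Real.abs_le_sqrt ?_
    have := Finset.single_le_sum
      (f := fun lam : Fin 2 → Dir L1 => (dbarT h τ₀ τ lam φ x) ^ 2)
      (fun a _ => sq_nonneg _) (Finset.mem_univ ![a, b])
    simpa [dbarT_two] using this
  have cv : ∀ u, ∀ w (hw : w ∈ L1), ∀ v : Vec d → ℝ,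
      |del h u (del h w v) x| ≤ A * |del h u (dbar h τ₀ τ (Sum.inl ⟨w, hw⟩ : Dir L1) v) x| := by
    intro u w hw v
    have e1 : del h u (dbar h τ₀ τ (Sum.inl ⟨w, hw⟩ : Dir L1) v) x
        = τ w * del h u (del h w v) x := del_smul h (τ w) u (del h w v) x
    have hp := hτ w hw
    rw [e1, abs_mul, abs_of_pos hp, ← mul_assoc]
    have : 1 ≤ A * τ w := by
      have := hA' w hw
      rw [inv_eq_one_div, div_le_iff₀ hp] at this
      exact this
    exact le_mul_of_one_le_left (abs_nonneg _) this
  have b2' : ∀ u ∈ L1, ∀ w ∈ L1, |del h u (del h w φ) x| ≤ A * (r * s2) := fun u hu w hw =>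
    (cv u w hw φ).trans (mul_le_mul_of_nonneg_left (b2 u hu _) hA0.le)
  have b3' : ∀ b : Dir L1, ∀ u ∈ L1, ∀ w ∈ L1,
      |del h u (del h w (dbar h τ₀ τ b φ)) x| ≤ A * (r * s3) := fun b u hu w hw =>
    (cv u w hw _).trans (mul_le_mul_of_nonneg_left (b3 u hu _ b) hA0.le)
  have b3'' : ∀ u ∈ L1, ∀ w ∈ L1, ∀ z ∈ L1,
      |del h u (del h w (del h z φ)) x| ≤ A * (A * (r * s3)) := by
    intro u hu w hw z hz
    have hp := hτ z hz
    have e1 : del h u (del h w (dbar h τ₀ τ (Sum.inl ⟨z, hz⟩ : Dir L1) φ)) x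
        = τ z * del h u (del h w (del h z φ)) x := by
      rw [← del_smul]
      congr 1
      funext y
      exact del_smul h (τ z) w (del h z φ) y
    have h1 := b3' (Sum.inl ⟨z, hz⟩) u hu w hw
    rw [e1, abs_mul, abs_of_pos hp] at h1
    have h2 : 1 ≤ A * τ z := by
      have := hA' z hz
      rw [inv_eq_one_div, div_le_iff₀ hp] at this
      exact this
    calc _ ≤ A * τ z * |del h u (del h w (del h z φ)) x| :=
          le_mul_of_one_le_left (abs_nonneg _) h2
      _ = A * (τ z * |del h u (del h w (del h z φ)) x|) := by ring
      _ ≤ _ := mul_le_mul_of_nonneg_left h1 hA0.le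
  have hwA : ∀ a : Dir L1, wt τ₀ τ a ≤ A := by
    intro a
    rcases a with l | i
    · exact hA'' _ l.2
    · exact hτ₀1.trans hA1
  have hw0 : ∀ a : Dir L1, 0 ≤ wt τ₀ τ a := wt_nonneg hτ₀ hτ
  have dl : ∀ (l : L1t L1) (b : Dir L1),
      |dbar h τ₀ τ (Sum.inl l : Dir L1) (dbar h τ₀ τ b φ) x| ≤ A * (r * s2) := by
    intro l b
    simp only [dbar]
    rw [abs_mul, abs_of_pos (hτ _ l.2)]
    exact mul_le_mul (hA _ l.2) (b2 _ l.2 b) (abs_nonneg _) hA0.le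
  have bd : ∀ a b : Dir L1, wt τ₀ τ a * |dbar h τ₀ τ a (dbar h τ₀ τ b φ) x|
      ≤ A ^ 2 * r * (s2 + τ₀ * e) := by
    intro a b
    have hAr : 1 ≤ A ^ 2 * r := by nlinarith
    have aux : A * (A * (r * s2)) ≤ A ^ 2 * r * (s2 + τ₀ * e) := by
      have : 0 ≤ A ^ 2 * r * (τ₀ * e) := by positivity
      linarith
    rcases a with l | i
    · refine le_trans ?_ aux
      exact mul_le_mul (hwA _) (dl l b) (abs_nonneg _) hA0.le
    · rcases b with l | j
      · refine le_trans ?_ aux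
        refine mul_le_mul (hwA _) ?_ (abs_nonneg _) hA0.le
        have e1 : dbar h τ₀ τ (Sum.inr i : Dir L1) (dbar h τ₀ τ (Sum.inl l : Dir L1) φ) x
            = dbar h τ₀ τ (Sum.inl l : Dir L1) (dbar h τ₀ τ (Sum.inr i : Dir L1) φ) x := by
          have hd : DifferentiableAt ℝ (del h l.1 φ) x := by
            unfold del
            fun_prop
          have h1 : pd i (fun y => τ l.1 * del h l.1 φ y) x = τ l.1 * pd i (del h l.1 φ) x := by
            simp only [pd]
            rw [fderiv_const_mul hd]
            simp
          simp only [dbar]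
          rw [h1, pd_del h l.1 i hφ, del_smul]
          ring
        rw [e1]
        exact dl l _
      · have h1 := be (Sum.inr i) (Sum.inr j)
        have h2 : τ₀ * |dbar h τ₀ τ (Sum.inr i : Dir L1) (dbar h τ₀ τ (Sum.inr j : Dir L1) φ) x|
            ≤ τ₀ * e := mul_le_mul_of_nonneg_left h1 hτ₀.le
        have h3 : 0 ≤ s2 + τ₀ * e := by positivity
        simp only [wt]
        nlinarith
  have L1b : ∀ a b : Dir L1,
      |L0mu h τ₀ τ L1 qt pt ![a] (shiftD h a (dbar h τ₀ τ b φ)) x|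
        ≤ wt τ₀ τ a * (3 * L1.card * B * A * r * (s3 + s2)) := by
    intro a b
    unfold L0mu Qmu Pmu
    simp only [dbarT_one]
    rw [sym_sum h L1 hs (fun l => dbar h τ₀ τ a (qt l) x) (hsym1 a)]
    have q1 := abs_sum_mul_le L1 (fun l => dbar h τ₀ τ a (qt l) x) _ (hq1 a)
      (fun l hl => sd_shiftD_bound hh hs _ x (b3' b) a l hl)
    have q2 := abs_sum_mul_le L1 (fun l => dbar h τ₀ τ a (pt l) x) _ (hp1 a)
      (fun l hl => del_shiftD_bound hh hh1 _ x (fun u hu => b2 u hu b) (b3' b) a l hl)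
    refine (abs_add_le _ _).trans ?_
    rw [abs_mul, abs_of_pos (by norm_num : (0 : ℝ) < 1 / 2)]
    have hW := hw0 a
    have z1 : 0 ≤ (L1.card : ℝ) * (wt τ₀ τ a * B) := by positivity
    have z2 : (L1.card : ℝ) * (wt τ₀ τ a * B) * (r * s2)
        ≤ (L1.card : ℝ) * (wt τ₀ τ a * B) * (3 * (A * (r * s2))) := by
      refine mul_le_mul_of_nonneg_left ?_ z1
      nlinarith [mul_nonneg hr0.le s20]
    have z3 : 0 ≤ (L1.card : ℝ) * (wt τ₀ τ a * B) * (A * (r * s3)) := by positivity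
    nlinarith
  have L2b : ∀ lam : Fin 2 → Dir L1,
      |Qmu h τ₀ τ L1 qt lam (shiftT h lam φ) x|
        ≤ wt τ₀ τ (lam 0) * (A * (3 * L1.card * B * A ^ 2 * r * (s3 + s2))) := by
    intro lam
    unfold Qmu
    rw [sym_sum h L1 hs (fun l => dbarT h τ₀ τ lam (qt l) x) (hsym2 lam)]
    have q1 := abs_sum_mul_le L1 (fun l => dbarT h τ₀ τ lam (qt l) x) _ (hq2 lam)
      (fun l hl => sd_shiftT_bound hh hh1 hs _ x b2' b3'' lam l hl)
    rw [abs_mul, abs_of_pos (by norm_num : (0 : ℝ) < 1 / 2)]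
    have hW := hw0 (lam 0)
    have hW1 := hw0 (lam 1)
    have hW2 := hwA (lam 1)
    have z0 : 5 * (A * (r * s2)) + 2 * (A * (A * (r * s3)))
        ≤ 6 * (A ^ 2 * r * (s3 + s2)) := by
      have : A * (r * s2) ≤ A * (A * (r * s2)) :=
        mul_le_mul_of_nonneg_left (le_mul_of_one_le_left (by positivity) hA1) hA0.le
      have y1 : 0 ≤ A * (A * (r * s2)) := by positivity
      have y2 : 0 ≤ A * (A * (r * s3)) := by positivity
      nlinarith
    calc _ ≤ 1 / 2 * ((L1.card : ℝ) * (wt τ₀ τ (lam 0) * A * B *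
            (6 * (A ^ 2 * r * (s3 + s2))))) := by
          refine mul_le_mul_of_nonneg_left (q1.trans ?_) (by norm_num)
          gcongr
      _ = _ := by ring
  set P := (s2 + τ₀ * e) * (s3 + s2) with hP
  have P0 : 0 ≤ P := by positivity
  set Cc := 3 * (L1.card : ℝ) * B * A ^ 5 * r ^ 2 with hCc
  have Cc0 : 0 ≤ Cc := by positivity
  have T1 : ∀ a b : Dir L1, dbar h τ₀ τ a (dbar h τ₀ τ b φ) x *
      L0mu h τ₀ τ L1 qt pt ![a] (shiftD h a (dbar h τ₀ τ b φ)) x ≤ Cc * P := by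
    intro a b
    refine (le_abs_self _).trans ?_
    rw [abs_mul]
    calc _ ≤ |dbar h τ₀ τ a (dbar h τ₀ τ b φ) x| *
            (wt τ₀ τ a * (3 * L1.card * B * A * r * (s3 + s2))) :=
          mul_le_mul_of_nonneg_left (L1b a b) (abs_nonneg _)
      _ = (wt τ₀ τ a * |dbar h τ₀ τ a (dbar h τ₀ τ b φ) x|) *
            (3 * L1.card * B * A * r * (s3 + s2)) := by ring
      _ ≤ (A ^ 2 * r * (s2 + τ₀ * e)) * (3 * L1.card * B * A * r * (s3 + s2)) :=
          mul_le_mul_of_nonneg_right (bd a b) (by positivity)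
      _ = (3 * (L1.card : ℝ) * B * A ^ 3 * r ^ 2) * P := by rw [hP]; ring
      _ ≤ Cc * P := by
          refine mul_le_mul_of_nonneg_right ?_ P0
          rw [hCc]
          gcongr
          norm_num
  have T2 : ∀ lam : Fin 2 → Dir L1, dbarT h τ₀ τ lam φ x *
      Qmu h τ₀ τ L1 qt lam (shiftT h lam φ) x ≤ Cc * P := by
    intro lam
    refine (le_abs_self _).trans ?_
    rw [abs_mul]
    have h1 := bd (lam 0) (lam 1)
    rw [← dbarT_two] at h1
    calc _ ≤ |dbarT h τ₀ τ lam φ x| *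
            (wt τ₀ τ (lam 0) * (A * (3 * L1.card * B * A ^ 2 * r * (s3 + s2)))) :=
          mul_le_mul_of_nonneg_left (L2b lam) (abs_nonneg _)
      _ = (wt τ₀ τ (lam 0) * |dbarT h τ₀ τ lam φ x|) *
            (A * (3 * L1.card * B * A ^ 2 * r * (s3 + s2))) := by ring
      _ ≤ (A ^ 2 * r * (s2 + τ₀ * e)) * (A * (3 * L1.card * B * A ^ 2 * r * (s3 + s2))) :=
          mul_le_mul_of_nonneg_right h1 (by positivity)
      _ = Cc * P := by rw [hP, hCc]; ring
  have hX : 0 ≤ Cc * P := by positivity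
  have S2 : ∑ lam : Fin 2 → Dir L1, dbarT h τ₀ τ lam φ x *
      Qmu h τ₀ τ L1 qt lam (shiftT h lam φ) x
      ≤ (Fintype.card (Fin 2 → Dir L1) : ℝ) * (Cc * P) := by
    refine (Finset.sum_le_card_nsmul _ _ (Cc * P) (fun lam _ => T2 lam)).trans ?_
    rw [nsmul_eq_mul, Finset.card_univ]
  have S1 : ∑ a : Dir L1, A1form h τ₀ τ L1 qt pt (dbar h τ₀ τ a φ) x
      ≤ (Fintype.card (Dir L1) : ℝ) * (2 * ((Fintype.card (Dir L1) : ℝ) * (Cc * P))) := by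
    refine (Finset.sum_le_card_nsmul _ _ (2 * ((Fintype.card (Dir L1) : ℝ) * (Cc * P)))
      (fun b _ => ?_)).trans ?_
    · unfold A1form
      refine mul_le_mul_of_nonneg_left ?_ (by norm_num)
      refine (Finset.sum_le_card_nsmul _ _ (Cc * P) (fun a _ => T1 a b)).trans ?_
      rw [nsmul_eq_mul, Finset.card_univ]
    · rw [nsmul_eq_mul, Finset.card_univ]
  have hn' : (1 : ℝ) ≤ n := by exact_mod_cast hn
  have hm' : (n : ℝ) ≤ m := by exact_mod_cast hnm
  have hm0 : (0 : ℝ) ≤ m := by positivity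
  have U1 : (n : ℝ) * (∑ a : Dir L1, A1form h τ₀ τ L1 qt pt (dbar h τ₀ τ a φ) x)
      ≤ m * ((Fintype.card (Dir L1) : ℝ) * (2 * ((Fintype.card (Dir L1) : ℝ) * (Cc * P)))) :=
    (mul_le_mul_of_nonneg_left S1 (by linarith)).trans
      (mul_le_mul_of_nonneg_right hm' (by positivity))
  have U2 : (n : ℝ) * ((n : ℝ) - 1) * (∑ lam : Fin 2 → Dir L1,
        dbarT h τ₀ τ lam φ x * Qmu h τ₀ τ L1 qt lam (shiftT h lam φ) x)
      ≤ (m * m) * ((Fintype.card (Fin 2 → Dir L1) : ℝ) * (Cc * P)) :=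
    (mul_le_mul_of_nonneg_left S2 (mul_nonneg (by linarith) (by linarith))).trans
      (mul_le_mul_of_nonneg_right (mul_le_mul hm' (by linarith) (by linarith) hm0)
        (by positivity))
  refine (add_le_add U1 U2).trans (le_of_eq ?_)
  ring

lemma young {η C τ₀ c₀ a b e : ℝ} (hη : 0 < η) (hη1 : η ≤ 1)
    (hτ : (C * τ₀) ^ 2 ≤ η ^ 2 * c₀) :
    C * ((a + τ₀ * e) * (b + a)) ≤
      η * b ^ 2 + (C ^ 2 / η + C + 1) * a ^ 2 + 2 * η * c₀ * e ^ 2 := by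
  have h1 : C * a * b ≤ η / 2 * b ^ 2 + C ^ 2 / (2 * η) * a ^ 2 := by
    have : 0 ≤ (η * b - C * a) ^ 2 / (2 * η) := by positivity
    have e1 : (η * b - C * a) ^ 2 / (2 * η)
      = η / 2 * b ^ 2 + C ^ 2 / (2 * η) * a ^ 2 - C * a * b := by field_simp; ring
    linarith
  have h2 : ∀ z : ℝ, C * τ₀ * e * z ≤ η / 2 * z ^ 2 + (C * τ₀) ^ 2 / (2 * η) * e ^ 2 := by
    intro z
    have : 0 ≤ (η * z - C * τ₀ * e) ^ 2 / (2 * η) := by positivity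
    have e1 : (η * z - C * τ₀ * e) ^ 2 / (2 * η)
      = η / 2 * z ^ 2 + (C * τ₀) ^ 2 / (2 * η) * e ^ 2 - C * τ₀ * e * z := by field_simp; ring
    linarith
  have h3 : (C * τ₀) ^ 2 / (2 * η) ≤ η * c₀ / 2 := by
    rw [div_le_iff₀ (by positivity)]
    linarith
  have hc : 0 ≤ η * c₀ := by
    have : 0 ≤ η * (η * c₀) := by nlinarith [sq_nonneg (C * τ₀)]
    exact nonneg_of_mul_nonneg_right this hη
  have h4 := mul_le_mul_of_nonneg_right h3 (sq_nonneg e)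
  have h5 : C ^ 2 / (2 * η) * a ^ 2 = C ^ 2 / η * a ^ 2 / 2 := by field_simp
  have h6 : 0 ≤ C ^ 2 / η * a ^ 2 := by positivity
  have h7 := mul_nonneg hc (sq_nonneg e)
  have := h2 b
  have := h2 a
  nlinarith [sq_nonneg a, sq_nonneg e]

end GK

set_option maxHeartbeats 1600000 in
open GK in
/-- Remark 2.2, second claim: under (S′), `τ_λ > 0` and `q_λ ≥ κ > 0`, for any
`δ ∈ (0,1)` the inequalities (3.24.01) (Assumption A5) hold for suitable `τ₀ > 0`,
small enough `h₀'` and appropriate `K₁`, with operators `𝒦 ∈ 𝔎`. -/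
theorem stmt12 {d : ℕ} (L1 : Finset (Vec d)) (hL1 : (0 : Vec d) ∉ L1)
    (τ : Vec d → ℝ) (hτ : ∀ l ∈ L1, 0 < τ l)
    (h₀ T : ℝ) (hh₀ : 0 < h₀) (hT : 0 < T)
    (c₀ : ℝ) (hc₀ : 0 < c₀) (m : ℕ) (hm : 2 ≤ m) (M : ℕ → ℝ)
    (q p : Vec d → ℝ → Vec d → ℝ) (c : ℝ → Vec d → ℝ)
    -- Assumption A1(m)
    (hA1 : CoefReg T L1 m q p c M)
    -- Assumption A2
    (hA2 : ∀ t ∈ Set.Icc (0 : ℝ) T, ∀ x y : Vec d,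
      (∑ l ∈ L1, q l t x • l) = ∑ l ∈ L1, q l t y • l)
    -- Assumption A3
    (hA3 : ∀ h ∈ Set.Ioc (0 : ℝ) h₀, ∀ l ∈ L1, ∀ t ∈ Set.Icc (0 : ℝ) T, ∀ x,
      0 ≤ q l t x + h * p l t x)
    (hc : ∀ t ∈ Set.Icc (0 : ℝ) T, ∀ x, c₀ ≤ c t x)
    -- condition (S′)
    (hS' : ∀ l ∈ L1, -l ∈ L1 ∧ ∀ t ∈ Set.Icc (0 : ℝ) T, ∀ x,
      fderiv ℝ (q l t) x = fderiv ℝ (q (-l) t) x)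
    -- uniform nondegeneracy `q_λ ≥ κ > 0`
    (κ : ℝ) (hκ : 0 < κ)
    (hq : ∀ l ∈ L1, ∀ t ∈ Set.Icc (0 : ℝ) T, ∀ x, κ ≤ q l t x) :
    ∀ δ ∈ Set.Ioo (0 : ℝ) 1, ∃ τ₀ > (0 : ℝ), ∃ h₀' ∈ Set.Ioc (0 : ℝ) h₀, ∃ K₁ : ℝ,
      ∀ h ∈ Set.Ioc (0 : ℝ) h₀', ∀ n : ℕ, 1 ≤ n → n ≤ m →
        ∀ φ : Vec d → ℝ, ContDiff ℝ (⊤ : ℕ∞) φ →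
          ∃ K : (Vec d → ℝ) → Vec d → ℝ, MemFrakK K ∧
            ∀ t ∈ Set.Icc (0 : ℝ) T, ∀ x,
              IneqA5 h τ₀ τ L1 (fun l => q l t) (fun l => p l t) (c t) δ K₁ n
                K φ x := by
  intro δ hδ
  obtain ⟨hR, -, -, -, hbd⟩ := hA1
  set η := 1 - δ with hη
  have hη0 : 0 < η := by have := hδ.2; linarith
  have hη1 : η ≤ 1 := by have := hδ.1; linarith
  -- constants
  set A : ℝ := 1 + ∑ l ∈ L1, (τ l + (τ l)⁻¹ + τ l * ‖l‖) with hAdef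
  have hpos : ∀ l ∈ L1, 0 ≤ τ l + (τ l)⁻¹ + τ l * ‖l‖ := by
    intro l hl
    have := hτ l hl
    positivity
  have hAle : ∀ l ∈ L1, τ l + (τ l)⁻¹ + τ l * ‖l‖ ≤ A := by
    intro l hl
    have := Finset.single_le_sum (f := fun l : Vec d => τ l + (τ l)⁻¹ + τ l * ‖l‖) hpos hl
    linarith
  have hA1 : 1 ≤ A := by
    have := Finset.sum_nonneg hpos
    linarith
  have hAa : ∀ l ∈ L1, τ l ≤ A ∧ (τ l)⁻¹ ≤ A ∧ τ l * ‖l‖ ≤ A := by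
    intro l hl
    have h1 := hτ l hl
    have h2 := hAle l hl
    have h3 : 0 < (τ l)⁻¹ := inv_pos.2 h1
    have h4 : 0 ≤ τ l * ‖l‖ := by positivity
    refine ⟨?_, ?_, ?_⟩ <;> linarith
  clear_value A
  set B : ℝ := 1 + |M 0| + |M 1| + |M 2| with hBdef
  have hB1 : 1 ≤ B := by
    have := abs_nonneg (M 0); have := abs_nonneg (M 1); have := abs_nonneg (M 2)
    linarith
  have hcoef : ∀ k ≤ 2, ∀ t ∈ Set.Icc (0 : ℝ) T, ∀ x, ∀ l ∈ L1,
      ‖iteratedFDeriv ℝ k (q l t) x‖ ≤ B ∧ ‖iteratedFDeriv ℝ k (p l t) x‖ ≤ B := by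
    intro k hk t ht x l hl
    have h1 := hbd k (hk.trans hm) t ht x
    have h2 := Finset.single_le_sum
      (f := fun l => ‖iteratedFDeriv ℝ k (q l t) x‖ ^ 2 + ‖iteratedFDeriv ℝ k (p l t) x‖ ^ 2)
      (fun l _ => by positivity) hl
    have h3 := sq_nonneg ‖iteratedFDeriv ℝ k (c t) x‖
    have h4 := sq_nonneg ‖iteratedFDeriv ℝ k (q l t) x‖
    have h5 := sq_nonneg ‖iteratedFDeriv ℝ k (p l t) x‖
    have h6 : |M k| ≤ B := by
      have := abs_nonneg (M 0); have := abs_nonneg (M 1); have := abs_nonneg (M 2)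
      interval_cases k <;> linarith
    constructor
    · have := sq_le_sq.1 (show ‖iteratedFDeriv ℝ k (q l t) x‖ ^ 2 ≤ M k ^ 2 by linarith)
      rw [abs_norm] at this
      exact this.trans h6
    · have := sq_le_sq.1 (show ‖iteratedFDeriv ℝ k (p l t) x‖ ^ 2 ≤ M k ^ 2 by linarith)
      rw [abs_norm] at this
      exact this.trans h6
  clear_value B
  set k : ℝ := κ / 2 with hkdef
  have hk : 0 < k := by positivity
  set r : ℝ := 1 + (√k)⁻¹ with hrdef
  have hr1 : 1 ≤ r := by
    have : 0 ≤ (√k)⁻¹ := by positivity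
    linarith
  have hr : ∀ z S : ℝ, k * z ^ 2 ≤ S → |z| ≤ r * √S := by
    intro z S hz
    have h1 : z ^ 2 ≤ S / k := by
      rw [le_div_iff₀ hk]; linarith
    have h2 := Real.abs_le_sqrt h1
    rw [Real.sqrt_div' _ hk.le] at h2
    have h3 := Real.sqrt_nonneg S
    calc |z| ≤ (√k)⁻¹ * √S := by rw [← div_eq_inv_mul]; exact h2
      _ ≤ r * √S := by rw [hrdef]; nlinarith
  clear_value r
  obtain ⟨C, hCdef⟩ : ∃ C : ℝ, C = ((m * (Fintype.card (Dir L1) * (2 * (Fintype.card (Dir L1))))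
        + m * m * (Fintype.card (Fin 2 → Dir L1))) * (3 * (L1.card : ℝ) * B * A ^ 5 * r ^ 2)) := ⟨_, rfl⟩
  have hC0 : 0 ≤ C := by
    have : 0 ≤ B := by linarith
    have : 0 ≤ A := by linarith
    have : 0 ≤ r := by linarith
    rw [hCdef]
    positivity
  set c1 : ℝ := min 1 c₀ with hc1
  have hc10 : 0 < c1 := lt_min one_pos hc₀
  have hc1sq : c1 ^ 2 ≤ c₀ := by
    have h1 : c1 ≤ 1 := min_le_left _ _
    have h2 : c1 ≤ c₀ := min_le_right _ _
    nlinarith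
  clear_value c1
  set τ₀ : ℝ := min 1 (η * c1 / (C + 1)) with hτ₀def
  have hτ₀ : 0 < τ₀ := lt_min one_pos (by positivity)
  have hτ₀1 : τ₀ ≤ 1 := min_le_left _ _
  have hτ₀C : (C * τ₀) ^ 2 ≤ η ^ 2 * c₀ := by
    have h1 : C * τ₀ ≤ η * c1 := by
      have h2 : τ₀ ≤ η * c1 / (C + 1) := min_le_right _ _
      rw [le_div_iff₀ (by linarith)] at h2
      linarith
    have h0 : 0 ≤ C * τ₀ := by positivity
    calc (C * τ₀) ^ 2 ≤ (η * c1) ^ 2 := by gcongr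
      _ = η ^ 2 * c1 ^ 2 := by ring
      _ ≤ η ^ 2 * c₀ := by gcongr
  clear_value τ₀
  refine ⟨τ₀, hτ₀, min h₀ (min 1 (κ / (2 * B))),
    ⟨lt_min hh₀ (lt_min one_pos (by positivity)), min_le_left _ _⟩, C ^ 2 / η + C + 1, ?_⟩
  intro h hh n hn hnm φ hφ
  refine ⟨fun ψ => ψ, ⟨fun ψ h1 h2 => ⟨h1, h2⟩, fun ψ h1 => h1, fun x => le_rfl⟩, ?_⟩
  intro t ht x
  have hh0 : 0 < h := hh.1
  have hhh : h ≤ 1 := hh.2.trans ((min_le_right _ _).trans (min_le_left _ _))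
  have hhκ : h ≤ κ / (2 * B) := hh.2.trans ((min_le_right _ _).trans (min_le_right _ _))
  have hs : ∀ l ∈ L1, -l ∈ L1 := fun l hl => (hS' l hl).1
  have hreg : ∀ l ∈ L1, ContDiff ℝ 2 (q l t) ∧ ContDiff ℝ 2 (p l t) := by
    intro l hl
    have h2m : (2 : WithTop ℕ∞) ≤ ((m : ℕ∞) : WithTop ℕ∞) :=
      WithTop.coe_le_coe.2 (show ((2 : ℕ) : ℕ∞) ≤ (m : ℕ∞) from Nat.cast_le.2 hm)
    exact ⟨(hR l hl t ht).1.of_le h2m, (hR l hl t ht).2.of_le h2m⟩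
  have d1 : ∀ f : Vec d → ℝ, ContDiff ℝ 2 f → Differentiable ℝ f :=
    fun f hf => hf.differentiable (by norm_num)
  have d2 : ∀ f : Vec d → ℝ, ContDiff ℝ 2 f → Differentiable ℝ (fderiv ℝ f) :=
    fun f hf => (hf.fderiv_right (m := 1) (by norm_num)).differentiable (by norm_num)
  have n1 : ∀ (f : Vec d → ℝ) y, ‖fderiv ℝ f y‖ = ‖iteratedFDeriv ℝ 1 f y‖ :=
    fun f y => (norm_iteratedFDeriv_one f).symm
  have n2 : ∀ (f : Vec d → ℝ) y,
      ‖fderiv ℝ (fderiv ℝ f) y‖ = ‖iteratedFDeriv ℝ 2 f y‖ := by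
    intro f y
    rw [← norm_iteratedFDeriv_one, norm_iteratedFDeriv_fderiv]
  have symf : ∀ a : Dir L1, ∀ l ∈ L1,
      dbar h τ₀ τ a (q l t) = dbar h τ₀ τ a (q (-l) t) := by
    intro a l hl
    have hd1 := d1 _ (hreg l hl).1
    have hd2 := d1 _ (hreg (-l) (hs l hl)).1
    have hf := (hS' l hl).2 t ht
    have hz : ∀ y, fderiv ℝ (fun z => q l t z - q (-l) t z) y = 0 := by
      intro y
      rw [fderiv_fun_sub (hd1 y) (hd2 y), hf y, sub_self]
    have hcst := is_const_of_fderiv_eq_zero (hd1.sub hd2) hz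
    funext y
    rcases a with u | i
    · have := hcst (y + h • u.1) y
      simp only [Pi.sub_apply] at this
      have e : q l t (y + h • u.1) - q l t y = q (-l) t (y + h • u.1) - q (-l) t y := by
        linarith
      simp only [dbar, del, e]
    · simp only [dbar, pd, hf y]
  have hmain := core (h := h) (τ₀ := τ₀) (A := A) (B := B) (r := r) (k := k) hh0 hhh hτ₀ hτ₀1
    (τ := τ) (L1 := L1) hτ hs hA1 (fun l hl => (hAa l hl).1) (fun l hl => (hAa l hl).2.1)
    (fun l hl => (hAa l hl).2.2) (by linarith) hr1 hr hk (fun l => q l t) (fun l => p l t) x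
    (fun a l hl => dbar_bound hh0 hτ₀ hτ (d1 _ (hreg l hl).1)
      (fun y => by rw [n1]; exact (hcoef 1 (by norm_num) t ht y l hl).1) a x)
    (fun a l hl => dbar_bound hh0 hτ₀ hτ (d1 _ (hreg l hl).2)
      (fun y => by rw [n1]; exact (hcoef 1 (by norm_num) t ht y l hl).2) a x)
    (fun lam l hl => by
      obtain ⟨g1, g2⟩ := dbar_deriv hh0 hτ₀ hτ (d1 _ (hreg l hl).1) (d2 _ (hreg l hl).1)
        (fun y => by rw [n2]; exact (hcoef 2 le_rfl t ht y l hl).1) (lam 1)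
      rw [dbarT_two, mul_assoc]
      exact dbar_bound hh0 hτ₀ hτ g1 g2 (lam 0) x)
    (fun a l hl => by rw [symf a l hl])
    (fun lam l hl => by rw [dbarT_two, dbarT_two, symf _ l hl])
    (fun l hl => by
      have h1 := hq l hl t ht x
      have h2 := (hcoef 0 (by norm_num) t ht x l hl).2
      rw [norm_iteratedFDeriv_zero, Real.norm_eq_abs] at h2
      have h3 := (abs_le.1 h2).1
      rw [le_div_iff₀ (by linarith)] at hhκ
      show κ / 2 ≤ q l t x + h * p l t x
      nlinarith)
    φ (hφ.differentiable (by norm_num)) n m hn hnm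
  rw [← hCdef] at hmain
  unfold IneqA5
  refine hmain.trans ?_
  refine (young hη0 hη1 hτ₀C).trans ?_
  have hchi : ∀ ψ : Vec d → ℝ,
      0 ≤ Qform h L1 (fun l => q l t) (fun l => p l t) ψ x := fun ψ =>
    Finset.sum_nonneg fun l hl =>
      mul_nonneg (hA3 h ⟨hh0, hh.2.trans (min_le_left _ _)⟩ l hl t ht x) (sq_nonneg _)
  rw [Real.sq_sqrt (Finset.sum_nonneg fun a _ => hchi _),
    Real.sq_sqrt (Finset.sum_nonneg fun a _ => hchi _),
    Real.sq_sqrt (Finset.sum_nonneg fun a _ => sq_nonneg _)]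
  have hE : 0 ≤ ∑ lam : Fin 2 → Dir L1, (dbarT h τ₀ τ lam φ x) ^ 2 :=
    Finset.sum_nonneg fun a _ => sq_nonneg _
  have hF : 0 ≤ (C ^ 2 / η + C + 1) * ∑ a : Dir L1, (dbar h τ₀ τ a φ x) ^ 2 :=
    mul_nonneg (by positivity) (Finset.sum_nonneg fun a _ => sq_nonneg _)
  have hG : 2 * η * c₀ * ∑ lam : Fin 2 → Dir L1, (dbarT h τ₀ τ lam φ x) ^ 2
      ≤ 2 * η * c t x * ∑ lam : Fin 2 → Dir L1, (dbarT h τ₀ τ lam φ x) ^ 2 := by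
    have := hc t ht x
    gcongr
  linarith
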